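/- Let X be a compact metric space, φ : ℝ × X → X a continuous flow, and f ∈ C(X, ℝ); assume the topological pressure P(g) is finite for every g ∈ C(X, ℝ). Fix ε > 0 and let (t_n)_{n≥0} be times with t_n ≥ n and (E_n)_{n≥0} finite nonempty (t_n, ε)-separated subsets of X such that liminf_{n→∞} (1/t_n) log Σ_{x∈E_n} exp(∫₀^{t_n} f(φ^s x) ds) ≥ P(f). Define the probability measures μ_n := ( Σ_{x∈E_n} exp(∫₀^{t_n} f(φ^s x) ds) · δ_{t_n}(x) ) / ( Σ_{x∈E_n} exp(∫₀^{t_n} f(φ^s x) ds) ) on X. Then every weak limit μ of the sequence (μ_n) is φ-invariant and satisfies J_f(μ) = 0. -/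

import Mathlib

open MeasureTheory Filter Topology ENNReal NNReal

/-- `E` is a `(t, ε)`-separated set for the flow `φ`: distinct points of `E` are moved at
distance `> ε` apart at some time `s ∈ [0, t]`. -/
def IsSeparatedSet {X : Type*} [MetricSpace X] (φ : ℝ → C(X, X)) (t ε : ℝ) (E : Set X) : Prop :=
  ∀ x ∈ E, ∀ y ∈ E, x ≠ y → ∃ s ∈ Set.Icc (0 : ℝ) t, ε < dist (φ s x) (φ s y)

/-- The topological pressure of a continuous function `f` for the flow `φ`, with values in
`[-∞, ∞]`. -/
noncomputable def pressure {X : Type*} [MetricSpace X] (φ : ℝ → C(X, X)) (f : C(X, ℝ)) : EReal :=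
  ⨆ (ε : ℝ) (_ : 0 < ε),
    Filter.limsup (fun t : ℝ =>
      ((1 / t : ℝ) : EReal) *
        ENNReal.log (⨆ (E : Finset X) (_ : IsSeparatedSet φ t ε (E : Set X)),
          ENNReal.ofReal (∑ x ∈ E, Real.exp (∫ s in (0 : ℝ)..t, f (φ s x))))) Filter.atTop

/-- The rate functional `J_f(μ) = sup_ω (∫ ω dμ - Q_f(ω))` where
`Q_f(ω) = P(f + ω) - P(f)`. -/
noncomputable def Jfun {X : Type*} [MetricSpace X] [MeasurableSpace X]
    (φ : ℝ → C(X, X)) (f : C(X, ℝ)) (μ : ProbabilityMeasure X) : EReal :=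
  ⨆ ω : C(X, ℝ), (((∫ x, ω x ∂(μ : Measure X)) : ℝ) : EReal) -
    (pressure φ (f + ω) - pressure φ f)

/-- The empirical measure `δ_t(x)` of the flow `φ`: the normalized occupation measure of
the orbit segment `{φ^s x : s ∈ (0, t]}`, so that
`∫ ω dδ_t(x) = (1/t) ∫₀ᵗ ω(φ^s x) ds`. -/
noncomputable def empDist {X : Type*} [MetricSpace X] [MeasurableSpace X]
    (φ : ℝ → C(X, X)) (t : ℝ) (x : X) : Measure X :=
  (ENNReal.ofReal t)⁻¹ • Measure.map (fun s => φ s x) (volume.restrict (Set.Ioc 0 t))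

lemma aux_orbit_cont {X : Type*} [MetricSpace X]
    (φ : ℝ → C(X, X)) (hφcont : Continuous fun p : ℝ × X => φ p.1 p.2) (x : X) :
    Continuous fun s => φ s x :=
  hφcont.comp (by fun_prop : Continuous fun s : ℝ => (s, x))

lemma aux_integral_empDist {X : Type*} [MetricSpace X] [CompactSpace X] [MeasurableSpace X]
    [BorelSpace X] (φ : ℝ → C(X, X)) (hφcont : Continuous fun p : ℝ × X => φ p.1 p.2)
    (t : ℝ) (ht : 0 < t) (x : X) (ω : C(X, ℝ)) :
    ∫ y, ω y ∂(empDist φ t x) = t⁻¹ * ∫ s in (0 : ℝ)..t, ω (φ s x) := by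
  have hc := aux_orbit_cont φ hφcont x
  rw [empDist, integral_smul_measure, integral_map hc.measurable.aemeasurable
    ω.continuous.aestronglyMeasurable, intervalIntegral.integral_of_le ht.le]
  simp [ENNReal.toReal_inv, ENNReal.toReal_ofReal ht.le]

instance aux_finite_empDist {X : Type*} [MetricSpace X] [MeasurableSpace X]
    (φ : ℝ → C(X, X)) (t : ℝ) [Fact (0 < t)] (x : X) :
    IsFiniteMeasure (empDist φ t x) := by
  have ht : 0 < t := Fact.out
  unfold empDist
  refine Measure.smul_finite _ ?_
  simp [ht]

lemma aux_integral_mu {X : Type*} [MetricSpace X] [CompactSpace X] [MeasurableSpace X]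
    [BorelSpace X] (φ : ℝ → C(X, X)) (hφcont : Continuous fun p : ℝ × X => φ p.1 p.2)
    (t : ℝ) (ht : 0 < t) (E : Finset X) (w : X → ℝ) (hw : ∀ x, 0 < w x) (ω : C(X, ℝ)) :
    ∫ y, ω y ∂((ENNReal.ofReal (∑ x ∈ E, w x))⁻¹ •
        ∑ x ∈ E, ENNReal.ofReal (w x) • empDist φ t x)
      = (∑ x ∈ E, w x)⁻¹ * ∑ x ∈ E, w x * (t⁻¹ * ∫ s in (0 : ℝ)..t, ω (φ s x)) := by
  haveI : Fact (0 < t) := ⟨ht⟩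
  have hS : 0 ≤ ∑ x ∈ E, w x := Finset.sum_nonneg fun x _ => (hw x).le
  rw [integral_smul_measure, integral_finset_sum_measure]
  · simp only [integral_smul_measure, aux_integral_empDist φ hφcont t ht, ENNReal.toReal_inv,
      ENNReal.toReal_ofReal hS, ENNReal.toReal_ofReal (hw _).le, smul_eq_mul]
  · intro x _
    haveI : IsFiniteMeasure (ENNReal.ofReal (w x) • empDist φ t x) :=
      Measure.smul_finite _ ENNReal.ofReal_ne_top
    exact (BoundedContinuousFunction.mkOfCompact ω).integrable _

lemma aux_shift {X : Type*} [MetricSpace X] [CompactSpace X]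
    (φ : ℝ → C(X, X)) (hφcont : Continuous fun p : ℝ × X => φ p.1 p.2)
    (hφadd : ∀ s t : ℝ, φ (s + t) = (φ s).comp (φ t))
    (t : ℝ) (x : X) (ω : C(X, ℝ)) (s : ℝ) :
    |(∫ r in (0 : ℝ)..t, (ω.comp (φ s)) (φ r x)) - ∫ r in (0 : ℝ)..t, ω (φ r x)|
      ≤ 2 * |s| * ‖ω‖ := by
  have hc : Continuous fun r => ω (φ r x) := ω.continuous.comp (aux_orbit_cont φ hφcont x)
  have hi : ∀ a b : ℝ, IntervalIntegrable (fun r => ω (φ r x)) volume a b :=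
    fun a b => hc.intervalIntegrable a b
  have h1 : (∫ r in (0 : ℝ)..t, (ω.comp (φ s)) (φ r x)) = ∫ r in s..(s + t), ω (φ r x) := by
    have := intervalIntegral.integral_comp_add_left (a := 0) (b := t)
      (fun r => ω (φ r x)) s
    rw [add_zero] at this
    rw [← this]
    congr 1
    ext r
    simp [hφadd]
  have h2 := intervalIntegral.integral_add_adjacent_intervals (hi 0 s) (hi s (s + t))
  have h3 := intervalIntegral.integral_add_adjacent_intervals (hi 0 t) (hi t (s + t))
  have b1 := intervalIntegral.norm_integral_le_of_norm_le_const (a := 0) (b := s)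
    (f := fun r => ω (φ r x)) (C := ‖ω‖) (fun r _ => ω.norm_coe_le_norm _)
  have b2 := intervalIntegral.norm_integral_le_of_norm_le_const (a := t) (b := s + t)
    (f := fun r => ω (φ r x)) (C := ‖ω‖) (fun r _ => ω.norm_coe_le_norm _)
  rw [Real.norm_eq_abs] at b1 b2
  rw [sub_zero] at b1
  rw [add_sub_cancel_right] at b2
  rw [h1, abs_le]
  rw [abs_le] at b1 b2
  constructor <;> linarith [b1.1, b1.2, b2.1, b2.2]

lemma aux_avg_abs {X : Type*} (E : Finset X) (hE : E.Nonempty) (w g h : X → ℝ)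
    (hw : ∀ x, 0 < w x) (C : ℝ) (hgh : ∀ x, |g x - h x| ≤ C) :
    |(∑ x ∈ E, w x)⁻¹ * ∑ x ∈ E, w x * g x - (∑ x ∈ E, w x)⁻¹ * ∑ x ∈ E, w x * h x| ≤ C := by
  have hS : 0 < ∑ x ∈ E, w x := Finset.sum_pos (fun x _ => hw x) hE
  rw [← mul_sub, ← Finset.sum_sub_distrib, abs_mul, abs_of_pos (inv_pos.2 hS), inv_mul_le_iff₀ hS,
    Finset.sum_mul]
  refine (Finset.abs_sum_le_sum_abs _ _).trans (Finset.sum_le_sum fun x _ => ?_)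
  rw [← mul_sub, abs_mul, abs_of_pos (hw x)]
  exact mul_le_mul_of_nonneg_left (hgh x) (hw x).le

lemma aux_jensen {X : Type*} (E : Finset X) (hE : E.Nonempty) (a b : X → ℝ) :
    Real.log (∑ x ∈ E, Real.exp (a x)) +
      (∑ x ∈ E, Real.exp (a x))⁻¹ * ∑ x ∈ E, Real.exp (a x) * b x
      ≤ Real.log (∑ x ∈ E, Real.exp (a x + b x)) := by
  have hS : 0 < ∑ x ∈ E, Real.exp (a x) := Finset.sum_pos (fun x _ => Real.exp_pos _) hE
  have hT : 0 < ∑ x ∈ E, Real.exp (a x + b x) := Finset.sum_pos (fun x _ => Real.exp_pos _) hE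
  have hj := convexOn_exp.map_sum_le (t := E)
    (w := fun x => (∑ x ∈ E, Real.exp (a x))⁻¹ * Real.exp (a x)) (p := b)
    (fun x _ => by positivity) (by rw [← Finset.mul_sum]; exact inv_mul_cancel₀ hS.ne')
    (fun x _ => Set.mem_univ _)
  simp only [smul_eq_mul, mul_assoc, ← Finset.mul_sum, ← Real.exp_add] at hj
  rw [Real.le_log_iff_exp_le hT, Real.exp_add, Real.exp_log hS]
  rwa [le_inv_mul_iff₀ hS] at hj

/-- Let `φ` be a continuous flow on a compact metric space `X` whose
topological pressure is finite on all of `C(X,ℝ)`, and let `f ∈ C(X,ℝ)` and `ε > 0`. Let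
`t_n ≥ n` be positive times and `E_n` nonempty finite `(t_n, ε)`-separated sets with
`liminf (1/t_n) log Σ_{x∈E_n} exp ∫₀^{t_n} f(φ^s x) ds ≥ P(f)`. Then every weak limit `μ`
of the probability measures
`μ_n = (Σ_{x∈E_n} e^{∫₀^{t_n} f(φ^s x) ds} δ_{t_n}(x)) / (Σ_{x∈E_n} e^{∫₀^{t_n} f(φ^s x) ds})`
is `φ`-invariant and satisfies `J_f(μ) = 0` (hence is an equilibrium state). -/
theorem weak_limit_is_equilibrium_state
    {X : Type*} [MetricSpace X] [CompactSpace X] [MeasurableSpace X] [BorelSpace X]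
    (φ : ℝ → C(X, X))
    (hφcont : Continuous fun p : ℝ × X => φ p.1 p.2)
    (hφ0 : φ 0 = ContinuousMap.id X)
    (hφadd : ∀ s t : ℝ, φ (s + t) = (φ s).comp (φ t))
    (f : C(X, ℝ))
    (hfin : ∀ g : C(X, ℝ), ∃ r : ℝ, pressure φ g = (r : EReal))
    (ε : ℝ) (hε : 0 < ε)
    (t : ℕ → ℝ) (ht0 : ∀ n, 0 < t n) (htn : ∀ n : ℕ, (n : ℝ) ≤ t n)
    (E : ℕ → Finset X) (hEne : ∀ n, (E n).Nonempty)
    (hEsep : ∀ n, IsSeparatedSet φ (t n) ε (E n : Set X))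
    (hliminf : pressure φ f ≤
      Filter.liminf (fun n : ℕ =>
        ((1 / t n : ℝ) : EReal) *
          ((Real.log (∑ x ∈ E n, Real.exp (∫ s in (0 : ℝ)..t n, f (φ s x))) : ℝ) : EReal))
        Filter.atTop)
    (μn : ℕ → ProbabilityMeasure X)
    (hμn : ∀ n, (μn n : Measure X) =
      (ENNReal.ofReal (∑ x ∈ E n, Real.exp (∫ s in (0 : ℝ)..t n, f (φ s x))))⁻¹ •
        ∑ x ∈ E n, ENNReal.ofReal (Real.exp (∫ s in (0 : ℝ)..t n, f (φ s x))) •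
          empDist φ (t n) x)
    (μlim : ProbabilityMeasure X)
    (hlim : Tendsto μn atTop (𝓝 μlim)) :
    (∀ (ω : C(X, ℝ)) (s : ℝ),
        ∫ x, ω (φ s x) ∂(μlim : Measure X) = ∫ x, ω x ∂(μlim : Measure X)) ∧
    Jfun φ f μlim = 0 := by
  have httop : Tendsto t atTop atTop :=
    tendsto_atTop_mono htn tendsto_natCast_atTop_atTop
  have hconv : ∀ ω : C(X, ℝ), Tendsto (fun n => ∫ y, ω y ∂(μn n : Measure X)) atTop
      (𝓝 (∫ y, ω y ∂(μlim : Measure X))) := fun ω =>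
    (ProbabilityMeasure.tendsto_iff_forall_integral_tendsto.1 hlim)
      (BoundedContinuousFunction.mkOfCompact ω)
  have hint : ∀ (ω : C(X, ℝ)) n, ∫ y, ω y ∂(μn n : Measure X) =
      (∑ x ∈ E n, Real.exp (∫ s in (0 : ℝ)..t n, f (φ s x)))⁻¹ *
        ∑ x ∈ E n, Real.exp (∫ s in (0 : ℝ)..t n, f (φ s x)) *
          ((t n)⁻¹ * ∫ s in (0 : ℝ)..t n, ω (φ s x)) := by
    intro ω n
    rw [hμn n]
    exact aux_integral_mu φ hφcont (t n) (ht0 n) (E n) _ (fun x => Real.exp_pos _) ω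
  refine ⟨?_, ?_⟩
  · intro ω s
    have h1 := (hconv (ω.comp (φ s))).sub (hconv ω)
    have h2 : Tendsto (fun n => (t n)⁻¹ * (2 * |s| * ‖ω‖)) atTop (𝓝 0) := by
      simpa using (tendsto_inv_atTop_zero.comp httop).mul_const (2 * |s| * ‖ω‖)
    have h3 := squeeze_zero_norm (f := fun n => (∫ y, (ω.comp (φ s)) y ∂(μn n : Measure X)) -
      ∫ y, ω y ∂(μn n : Measure X)) (fun n => ?_) h2
    · have := tendsto_nhds_unique h1 h3
      exact sub_eq_zero.1 this
    · rw [Real.norm_eq_abs, hint, hint]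
      refine aux_avg_abs (E n) (hEne n) _ _ _ (fun x => Real.exp_pos _) _ (fun x => ?_)
      rw [← mul_sub, abs_mul, abs_of_pos (inv_pos.2 (ht0 n))]
      exact mul_le_mul_of_nonneg_left (aux_shift φ hφcont hφadd (t n) x ω s)
        (inv_pos.2 (ht0 n)).le
  · obtain ⟨p, hp⟩ := hfin f
    apply le_antisymm
    · refine iSup_le fun ω => ?_
      obtain ⟨q, hq⟩ := hfin (f + ω)
      rw [hp, hq]
      suffices h : p + ∫ x, ω x ∂(μlim : Measure X) ≤ q by
        rw [← EReal.coe_sub, ← EReal.coe_sub, ← EReal.coe_zero, EReal.coe_le_coe_iff]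
        linarith
      refine le_of_forall_pos_le_add fun δ hδ => ?_
      -- eventual lower bound along the sequence
      have hlow : ∀ᶠ n in atTop, p - δ / 2 < 1 / t n *
          Real.log (∑ x ∈ E n, Real.exp (∫ s in (0 : ℝ)..t n, f (φ s x))) := by
        have hlt : ((p - δ / 2 : ℝ) : EReal) < Filter.liminf (fun n : ℕ =>
          ((1 / t n : ℝ) : EReal) *
            ((Real.log (∑ x ∈ E n, Real.exp (∫ s in (0 : ℝ)..t n, f (φ s x))) : ℝ) : EReal))
          Filter.atTop := by
          refine lt_of_lt_of_le ?_ hliminf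
          rw [hp, EReal.coe_lt_coe_iff]
          linarith
        filter_upwards [eventually_lt_of_lt_liminf hlt] with n hn
        rwa [← EReal.coe_mul, EReal.coe_lt_coe_iff] at hn
      have hω := (hconv ω).eventually_const_lt
        (show (∫ y, ω y ∂(μlim : Measure X)) - δ / 2 < ∫ y, ω y ∂(μlim : Measure X) by linarith)
      have hkey : ∀ᶠ n in atTop, ((p + (∫ y, ω y ∂(μlim : Measure X)) - δ : ℝ) : EReal) ≤
          ((1 / t n : ℝ) : EReal) *
            ENNReal.log (⨆ (E : Finset X) (_ : IsSeparatedSet φ (t n) ε (E : Set X)),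
            ENNReal.ofReal (∑ x ∈ E, Real.exp (∫ s in (0 : ℝ)..t n, (f + ω) (φ s x)))) := by
        filter_upwards [hlow, hω] with n hn1 hn2
        have htp := ht0 n
        have hpos : 0 < ∑ x ∈ E n, Real.exp (∫ s in (0 : ℝ)..t n, (f + ω) (φ s x)) :=
          Finset.sum_pos (fun x _ => Real.exp_pos _) (hEne n)
        have hA : ENNReal.log (ENNReal.ofReal
            (∑ x ∈ E n, Real.exp (∫ s in (0 : ℝ)..t n, (f + ω) (φ s x)))) ≤
            ENNReal.log (⨆ (E : Finset X) (_ : IsSeparatedSet φ (t n) ε (E : Set X)),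
            ENNReal.ofReal (∑ x ∈ E, Real.exp (∫ s in (0 : ℝ)..t n, (f + ω) (φ s x)))) :=
          ENNReal.log_monotone (le_iSup₂_of_le (E n) (hEsep n) le_rfl)
        rw [ENNReal.log_ofReal_of_pos hpos] at hA
        refine le_trans ?_ (mul_le_mul_of_nonneg_left hA
          (by exact_mod_cast (one_div_pos.2 htp).le))
        rw [← EReal.coe_mul, EReal.coe_le_coe_iff]
        have hsum : ∀ x, (∫ s in (0 : ℝ)..t n, (f + ω) (φ s x)) =
            (∫ s in (0 : ℝ)..t n, f (φ s x)) + ∫ s in (0 : ℝ)..t n, ω (φ s x) := by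
          intro x
          have hc := aux_orbit_cont φ hφcont x
          exact intervalIntegral.integral_add ((f.continuous.comp hc).intervalIntegrable _ _)
            ((ω.continuous.comp hc).intervalIntegrable _ _)
        simp only [hsum]
        have hJ := aux_jensen (E n) (hEne n) (fun x => ∫ s in (0 : ℝ)..t n, f (φ s x))
          (fun x => ∫ s in (0 : ℝ)..t n, ω (φ s x))
        have hJ' := mul_le_mul_of_nonneg_left hJ (one_div_pos.2 htp).le
        refine le_trans ?_ hJ'
        rw [hint] at hn2
        simp only [mul_left_comm _ (t n)⁻¹, ← Finset.mul_sum] at hn2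
        rw [mul_add, one_div]
        rw [one_div] at hn1
        linarith
      have hP : ((p + (∫ y, ω y ∂(μlim : Measure X)) - δ : ℝ) : EReal) ≤ pressure φ (f + ω) := by
        refine le_iSup₂_of_le ε hε ?_
        exact le_limsup_of_frequently_le (httop.frequently hkey.frequently)
      rw [hq, EReal.coe_le_coe_iff] at hP
      linarith
    · refine le_iSup_of_le (0 : C(X, ℝ)) ?_
      rw [add_zero, hp, ← EReal.coe_sub]
      simp
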